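/- The three-dimensional periodic heat kernel Φ̃ is infinitely differentiable on (0,∞) × ℝ³, is 2π-periodic in each of the three space variables, and satisfies the heat equation ∂ₜΦ̃(t,x) = ΔΦ̃(t,x) pointwise on (0,∞) × ℝ³, where Δ denotes the Laplacian in the three space variables. -/

import Mathlib

open MeasureTheory Real Filter

/-- The one-dimensional periodic heat kernel
`Φ(t,x) = 1/(2π) + (1/π)·∑_{n=1}^∞ exp(−n²t)·cos(nx)`. -/
noncomputable def Φ (t x : ℝ) : ℝ :=
  1 / (2 * π) + (1 / π) * ∑' n : ℕ, Real.exp (-((n : ℝ) + 1) ^ 2 * t) * Real.cos (((n : ℝ) + 1) * x)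

/-- The three-dimensional periodic heat kernel `Φ̃(t,x) = Φ(t,x₁)·Φ(t,x₂)·Φ(t,x₃)`. -/
noncomputable def Φ₃ (t x₁ x₂ x₃ : ℝ) : ℝ := Φ t x₁ * Φ t x₂ * Φ t x₃

/-!
For `t > 0`, `Φ(t,x) = (2π)⁻¹ ∑_{n ∈ ℤ} e^{-n²t + inx}`, by pairing the frequencies `n` and `-n`.
On a series `∑ᵢ aᵢ e^{(iνᵢ)²t + iνᵢx}`, formal differentiation multiplies the coefficients by `iνᵢ`
for `∂ₓ` and by `(iνᵢ)²` for `∂ₜ`, and the Gaussian damping keeps the new coefficients admissible at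
every positive time. So term-by-term differentiation is legitimate and can be iterated, which gives
smoothness, while `∂ₜ` and `∂ₓ²` agree on coefficients, which is the heat equation. In three
dimensions, the Leibniz rule for `∂ₜ` distributes over the factors exactly as the Laplacian does.
-/

section HeatSeries

variable {ι : Type*} {a : ι → ℂ} {ν : ι → ℝ}

/-- Summability of `∑ᵢ ‖aᵢ‖ e^{-νᵢ²t}` for every positive time: the weakest condition under which
the heat flow of the trigonometric series `∑ᵢ aᵢ e^{iνᵢx}` converges absolutely for all `t > 0`. -/
def HeatSummable (a : ι → ℂ) (ν : ι → ℝ) : Prop :=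
  ∀ t : ℝ, 0 < t → Summable fun i => ‖a i‖ * Real.exp (-ν i ^ 2 * t)

/-- The heat mode `z e^{(iω)²t + iωx}` of amplitude `z` and frequency `ω` at `p = (t, x)`. The
exponent is written in terms of `iω` because `∂ₓ` multiplies the mode by `iω` and `∂ₜ` by
`(iω)²`. -/
noncomputable def heatMode (z : ℂ) (ω : ℝ) (p : ℝ × ℝ) : ℂ :=
  z * Complex.exp ((Complex.I * ω) ^ 2 * p.1 + Complex.I * ω * p.2)

/-- The heat flow `∑ᵢ aᵢ e^{-νᵢ²t + iνᵢx}` of a trigonometric series, as a function of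
`p = (t, x)`. -/
noncomputable def heatSeries (a : ι → ℂ) (ν : ι → ℝ) (p : ℝ × ℝ) : ℂ :=
  ∑' i, heatMode (a i) (ν i) p

/-- The coefficients `aᵢ · iνᵢ` of the formal `x`-derivative of `∑ᵢ aᵢ e^{iνᵢx}`. -/
noncomputable def derivCoeff (ν : ι → ℝ) (a : ι → ℂ) : ι → ℂ :=
  fun i => a i * (Complex.I * ν i)

lemma heatMode_eq_mul_exp_mul_I (z : ℂ) (ω : ℝ) (p : ℝ × ℝ) :
    heatMode z ω p = z * (Real.exp (-ω ^ 2 * p.1) * Complex.exp ((ω * p.2 : ℝ) * Complex.I)) := by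
  rw [heatMode, mul_pow, Complex.I_sq, Complex.exp_add]
  push_cast
  ring_nf

lemma norm_heatMode (z : ℂ) (ω : ℝ) (p : ℝ × ℝ) :
    ‖heatMode z ω p‖ = ‖z‖ * Real.exp (-ω ^ 2 * p.1) := by
  rw [heatMode_eq_mul_exp_mul_I, norm_mul, norm_mul, Complex.norm_exp_ofReal_mul_I, mul_one,
    Complex.norm_real, Real.norm_of_nonneg (Real.exp_pos _).le]

lemma re_heatMode_ofReal (c ω : ℝ) (p : ℝ × ℝ) :
    (heatMode c ω p).re = c * (Real.exp (-ω ^ 2 * p.1) * Real.cos (ω * p.2)) := by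
  rw [heatMode_eq_mul_exp_mul_I, Complex.re_ofReal_mul, Complex.re_ofReal_mul,
    Complex.exp_ofReal_mul_I_re]

lemma norm_heatMode_le (z : ℂ) (ω : ℝ) {ε : ℝ} {p : ℝ × ℝ} (hp : ε ≤ p.1) :
    ‖heatMode z ω p‖ ≤ ‖z‖ * Real.exp (-ω ^ 2 * ε) := by
  rw [norm_heatMode]
  gcongr ‖z‖ * Real.exp ?_
  exact mul_le_mul_of_nonpos_left hp (neg_nonpos.2 (sq_nonneg ω))

lemma hasFDerivAt_heatMode (z : ℂ) (ω : ℝ) (p : ℝ × ℝ) :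
    HasFDerivAt (heatMode z ω)
      ((ContinuousLinearMap.fst ℝ ℝ ℝ).smulRight
          (heatMode (z * (Complex.I * ω) * (Complex.I * ω)) ω p) +
        (ContinuousLinearMap.snd ℝ ℝ ℝ).smulRight (heatMode (z * (Complex.I * ω)) ω p)) p := by
  have ht : HasFDerivAt (fun q : ℝ × ℝ => (q.1 : ℂ))
      (Complex.ofRealCLM ∘L ContinuousLinearMap.fst ℝ ℝ ℝ) p :=
    (Complex.ofRealCLM ∘L ContinuousLinearMap.fst ℝ ℝ ℝ).hasFDerivAt
  have hx : HasFDerivAt (fun q : ℝ × ℝ => (q.2 : ℂ))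
      (Complex.ofRealCLM ∘L ContinuousLinearMap.snd ℝ ℝ ℝ) p :=
    (Complex.ofRealCLM ∘L ContinuousLinearMap.snd ℝ ℝ ℝ).hasFDerivAt
  refine ((((ht.const_mul ((Complex.I * ω) ^ 2)).add
    (hx.const_mul (Complex.I * ω))).cexp).const_mul z).congr_fderiv ?_
  ext <;> simp [heatMode] <;> ring

lemma abs_mul_exp_neg_sq_mul_le (ω : ℝ) {t : ℝ} (ht : 0 < t) :
    |ω| * Real.exp (-ω ^ 2 * t) ≤ (1 + 2 / t) * Real.exp (-ω ^ 2 * (t / 2)) := by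
  have hω : |ω| ≤ (1 + 2 / t) * Real.exp (ω ^ 2 * (t / 2)) :=
    calc |ω| ≤ 1 + ω ^ 2 := by nlinarith [sq_nonneg (|ω| - 1), sq_abs ω, abs_nonneg ω]
      _ ≤ (1 + 2 / t) * (ω ^ 2 * (t / 2) + 1) := by
        have : (1 + 2 / t) * (ω ^ 2 * (t / 2) + 1) = 1 + ω ^ 2 + 2 / t + ω ^ 2 * (t / 2) := by
          field_simp
          ring
        rw [this, add_assoc]
        exact le_add_of_nonneg_right (by positivity)
      _ ≤ (1 + 2 / t) * Real.exp (ω ^ 2 * (t / 2)) := by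
        gcongr
        exact Real.add_one_le_exp _
  calc |ω| * Real.exp (-ω ^ 2 * t)
      ≤ (1 + 2 / t) * Real.exp (ω ^ 2 * (t / 2)) * Real.exp (-ω ^ 2 * t) := by gcongr
    _ = (1 + 2 / t) * Real.exp (-ω ^ 2 * (t / 2)) := by
      rw [mul_assoc, ← Real.exp_add]
      ring_nf

namespace HeatSummable

protected lemma derivCoeff (h : HeatSummable a ν) : HeatSummable (derivCoeff ν a) ν := by
  intro t ht
  refine ((h (t / 2) (half_pos ht)).mul_left (1 + 2 / t)).of_nonneg_of_le
    (fun i => by positivity) fun i => ?_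
  calc ‖a i * (Complex.I * ν i)‖ * Real.exp (-ν i ^ 2 * t)
      = ‖a i‖ * (|ν i| * Real.exp (-ν i ^ 2 * t)) := by simp [mul_assoc]
    _ ≤ ‖a i‖ * ((1 + 2 / t) * Real.exp (-ν i ^ 2 * (t / 2))) := by
      gcongr ‖a i‖ * ?_
      exact abs_mul_exp_neg_sq_mul_le (ν i) ht
    _ = (1 + 2 / t) * (‖a i‖ * Real.exp (-ν i ^ 2 * (t / 2))) := mul_left_comm _ _ _

lemma summable_heatMode (h : HeatSummable a ν) {p : ℝ × ℝ} (hp : 0 < p.1) :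
    Summable fun i => heatMode (a i) (ν i) p :=
  .of_norm_bounded (h p.1 hp) fun i => (norm_heatMode (a i) (ν i) p).le

lemma hasFDerivAt_heatSeries (h : HeatSummable a ν) {p : ℝ × ℝ} (hp : 0 < p.1) :
    HasFDerivAt (heatSeries a ν)
      ((ContinuousLinearMap.fst ℝ ℝ ℝ).smulRight
          (heatSeries (derivCoeff ν (derivCoeff ν a)) ν p) +
        (ContinuousLinearMap.snd ℝ ℝ ℝ).smulRight (heatSeries (derivCoeff ν a) ν p)) p := by
  have hbound := (h.derivCoeff.derivCoeff _ (half_pos hp)).add (h.derivCoeff _ (half_pos hp))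
  have hconvex : Convex ℝ (Set.Ioi (p.1 / 2) ×ˢ (Set.univ : Set ℝ)) :=
    (convex_Ioi _).prod convex_univ
  have hmem : p ∈ Set.Ioi (p.1 / 2) ×ˢ (Set.univ : Set ℝ) := ⟨half_lt_self hp, trivial⟩
  refine (hasFDerivAt_tsum_of_isPreconnected hbound (isOpen_Ioi.prod isOpen_univ)
    hconvex.isPreconnected (fun i q _ => hasFDerivAt_heatMode (a i) (ν i) q) (fun i q hq => ?_)
    hmem (h.summable_heatMode hp) hmem).congr_fderiv ?_
  · refine (norm_add_le _ _).trans (add_le_add ?_ ?_) <;>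
      rw [ContinuousLinearMap.norm_smulRight_apply]
    · exact (mul_le_of_le_one_left (norm_nonneg _) (ContinuousLinearMap.norm_fst_le ℝ ℝ ℝ)).trans
        (norm_heatMode_le _ _ hq.1.le)
    · exact (mul_le_of_le_one_left (norm_nonneg _) (ContinuousLinearMap.norm_snd_le ℝ ℝ ℝ)).trans
        (norm_heatMode_le _ _ hq.1.le)
  · have htime := (h.derivCoeff.derivCoeff.summable_heatMode hp).hasSum.mapL
      (ContinuousLinearMap.smulRightL ℝ (ℝ × ℝ) ℂ (ContinuousLinearMap.fst ℝ ℝ ℝ))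
    have hspace := (h.derivCoeff.summable_heatMode hp).hasSum.mapL
      (ContinuousLinearMap.smulRightL ℝ (ℝ × ℝ) ℂ (ContinuousLinearMap.snd ℝ ℝ ℝ))
    exact (htime.add hspace).tsum_eq

lemma contDiffOn_heatSeries (h : HeatSummable a ν) :
    ContDiffOn ℝ (⊤ : ℕ∞) (heatSeries a ν) (Set.Ioi 0 ×ˢ Set.univ) := by
  refine contDiffOn_infty.2 fun m => ?_
  induction m generalizing a with
  | zero =>
    exact contDiffOn_zero.2 fun p hp =>
      (h.hasFDerivAt_heatSeries hp.1).continuousAt.continuousWithinAt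
  | succ m ih =>
    push_cast
    rw [contDiffOn_succ_iff_fderiv_of_isOpen (isOpen_Ioi.prod isOpen_univ)]
    refine ⟨fun p hp => (h.hasFDerivAt_heatSeries hp.1).differentiableAt.differentiableWithinAt,
      by simp, ?_⟩
    exact ((contDiffOn_const.smulRight (ih h.derivCoeff.derivCoeff)).add
      (contDiffOn_const.smulRight (ih h.derivCoeff))).congr
        fun p hp => (h.hasFDerivAt_heatSeries hp.1).fderiv

lemma hasDerivAt_heatSeries_time (h : HeatSummable a ν) {t : ℝ} (ht : 0 < t) (x : ℝ) :
    HasDerivAt (fun s => heatSeries a ν (s, x))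
      (heatSeries (derivCoeff ν (derivCoeff ν a)) ν (t, x)) t := by
  simpa [Function.comp_def] using (h.hasFDerivAt_heatSeries (p := (t, x)) ht).comp_hasDerivAt t
    ((hasDerivAt_id t).prodMk (hasDerivAt_const t x))

lemma hasDerivAt_heatSeries_space (h : HeatSummable a ν) {t : ℝ} (ht : 0 < t) (x : ℝ) :
    HasDerivAt (fun y => heatSeries a ν (t, y)) (heatSeries (derivCoeff ν a) ν (t, x)) x := by
  simpa [Function.comp_def] using (h.hasFDerivAt_heatSeries (p := (t, x)) ht).comp_hasDerivAt x
    ((hasDerivAt_const x t).prodMk (hasDerivAt_id x))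

lemma hasDerivAt_re_heatSeries_space (h : HeatSummable a ν) {t : ℝ} (ht : 0 < t) (x : ℝ) :
    HasDerivAt (fun y => (heatSeries a ν (t, y)).re)
      (heatSeries (derivCoeff ν a) ν (t, x)).re x :=
  Complex.reCLM.hasFDerivAt.comp_hasDerivAt x (h.hasDerivAt_heatSeries_space ht x)

lemma heat_equation_re_heatSeries (h : HeatSummable a ν) {t : ℝ} (ht : 0 < t) (x : ℝ) :
    HasDerivAt (fun s => (heatSeries a ν (s, x)).re)
      (deriv (deriv fun y => (heatSeries a ν (t, y)).re) x) t := by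
  have hderiv : deriv (fun y => (heatSeries a ν (t, y)).re) =
      fun y => (heatSeries (derivCoeff ν a) ν (t, y)).re :=
    funext fun y => (h.hasDerivAt_re_heatSeries_space ht y).deriv
  rw [hderiv, (h.derivCoeff.hasDerivAt_re_heatSeries_space ht x).deriv]
  exact Complex.reCLM.hasFDerivAt.comp_hasDerivAt t (h.hasDerivAt_heatSeries_time ht x)

end HeatSummable

end HeatSeries

lemma heat_equation_mul_mul {𝕜 : Type*} [NontriviallyNormedField 𝕜]
    {u v w : 𝕜 → 𝕜 → 𝕜} {t x y z : 𝕜}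
    (hu : HasDerivAt (fun s => u s x) (deriv (deriv (u t)) x) t)
    (hv : HasDerivAt (fun s => v s y) (deriv (deriv (v t)) y) t)
    (hw : HasDerivAt (fun s => w s z) (deriv (deriv (w t)) z) t) :
    HasDerivAt (fun s => u s x * v s y * w s z)
      (deriv (deriv fun r => u t r * v t y * w t z) x +
        deriv (deriv fun r => u t x * v t r * w t z) y +
        deriv (deriv fun r => u t x * v t y * w t r) z) t := by
  refine ((hu.fun_mul hv).fun_mul hw).congr_deriv ?_
  simp only [deriv_mul_const_field', deriv_const_mul_field']
  ring

lemma heatSummable_const_intCast (z : ℂ) : HeatSummable (fun _ : ℤ => z) (fun n => n) := by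
  intro t ht
  let τ : ℂ := (t / π : ℝ) * Complex.I
  have hτ : τ.im = t / π := by simp [τ]
  have hsum := (summable_jacobiTheta₂_term_iff 0 τ).2 (hτ ▸ div_pos ht pi_pos)
  refine (hsum.norm.congr fun n => ?_).mul_left ‖z‖
  rw [norm_jacobiTheta₂_term, hτ, Complex.zero_im]
  congr 1
  field_simp
  ring

lemma Φ_eq_re_heatSeries {t : ℝ} (ht : 0 < t) (x : ℝ) :
    Φ t x = (heatSeries (fun _ : ℤ => ((1 / (2 * π) : ℝ) : ℂ)) (fun n => n) (t, x)).re := by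
  have hsum := (heatSummable_const_intCast (1 / (2 * π) : ℝ)).summable_heatMode (p := (t, x)) ht
  have hre := (Complex.hasSum_re hsum.hasSum).summable
  have hcoeff : 2 * (1 / (2 * π)) = 1 / π := by field_simp
  rw [heatSeries, Complex.re_tsum hsum]
  simp only [re_heatMode_ofReal] at hre ⊢
  rw [tsum_int_eq_zero_add_two_mul_tsum_pnat (fun n => by simp) hre,
    tsum_pnat_eq_tsum_succ (f := fun n : ℕ => 1 / (2 * π) *
      (Real.exp (-((n : ℤ) : ℝ) ^ 2 * t) * Real.cos (((n : ℤ) : ℝ) * x))), tsum_mul_left,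
    nsmul_eq_mul, Nat.cast_ofNat, ← mul_assoc 2, hcoeff]
  simp [Φ]

lemma contDiffOn_Φ :
    ContDiffOn ℝ (⊤ : ℕ∞) (fun p : ℝ × ℝ => Φ p.1 p.2) (Set.Ioi 0 ×ˢ Set.univ) :=
  (Complex.reCLM.contDiff.comp_contDiffOn
    (heatSummable_const_intCast _).contDiffOn_heatSeries).congr
      fun p hp => Φ_eq_re_heatSeries hp.1 p.2

lemma Φ_periodic (t : ℝ) : Function.Periodic (Φ t) (2 * π) := by
  intro x
  have hcos (n : ℕ) : Real.cos ((n + 1) * (x + 2 * π)) = Real.cos ((n + 1) * x) := by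
    rw [mul_add]
    exact_mod_cast Real.cos_add_nat_mul_two_pi ((n + 1) * x) (n + 1)
  simp only [Φ, hcos]

lemma heat_equation_Φ {t : ℝ} (ht : 0 < t) (x : ℝ) :
    HasDerivAt (fun s => Φ s x) (deriv (deriv (Φ t)) x) t := by
  rw [funext (Φ_eq_re_heatSeries ht)]
  refine ((heatSummable_const_intCast _).heat_equation_re_heatSeries
    ht x).congr_of_eventuallyEq ?_
  filter_upwards [Ioi_mem_nhds ht] with s hs using Φ_eq_re_heatSeries hs x

/-- `Φ̃` is infinitely differentiable on `(0,∞) × ℝ³`, is `2π`-periodic in each of the three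
space variables, and satisfies the heat equation `∂ₜΦ̃ = ΔΦ̃` pointwise on `(0,∞) × ℝ³`,
where `Δ` is the Laplacian in the three space variables. -/
theorem statement_17 :
    ContDiffOn ℝ (⊤ : ℕ∞) (fun p : ℝ × ℝ × ℝ × ℝ => Φ₃ p.1 p.2.1 p.2.2.1 p.2.2.2)
      (Set.Ioi (0 : ℝ) ×ˢ (Set.univ : Set (ℝ × ℝ × ℝ))) ∧
    (∀ t x₁ x₂ x₃ : ℝ, 0 < t →
      Φ₃ t (x₁ + 2 * π) x₂ x₃ = Φ₃ t x₁ x₂ x₃ ∧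
      Φ₃ t x₁ (x₂ + 2 * π) x₃ = Φ₃ t x₁ x₂ x₃ ∧
      Φ₃ t x₁ x₂ (x₃ + 2 * π) = Φ₃ t x₁ x₂ x₃) ∧
    (∀ t x₁ x₂ x₃ : ℝ, 0 < t →
      deriv (fun s : ℝ => Φ₃ s x₁ x₂ x₃) t
        = deriv (deriv (fun y : ℝ => Φ₃ t y x₂ x₃)) x₁
          + deriv (deriv (fun y : ℝ => Φ₃ t x₁ y x₃)) x₂
          + deriv (deriv (fun y : ℝ => Φ₃ t x₁ x₂ y)) x₃) := by
  refine ⟨?_, fun t x₁ x₂ x₃ _ => ?_, fun t x₁ x₂ x₃ ht => ?_⟩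
  · have hΦ {g : ℝ × ℝ × ℝ × ℝ → ℝ} (hg : ContDiff ℝ (⊤ : ℕ∞) g) :
        ContDiffOn ℝ (⊤ : ℕ∞) (fun p => Φ p.1 (g p)) (Set.Ioi 0 ×ˢ Set.univ) :=
      contDiffOn_Φ.comp (contDiff_fst.prodMk hg).contDiffOn fun p hp => ⟨hp.1, trivial⟩
    exact ((hΦ (by fun_prop)).mul (hΦ (by fun_prop))).mul (hΦ (by fun_prop))
  · simp only [Φ₃, Φ_periodic t _, and_self]
  · exact (heat_equation_mul_mul (heat_equation_Φ ht x₁)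
      (heat_equation_Φ ht x₂) (heat_equation_Φ ht x₃)).deriv
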